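/- arXiv:1207.5812 — 4 statements merged into one kernel-verified Lean document; each statement's English description precedes it below -/
import Mathlib

section
/- Let G be a weighted digraph whose adjacency matrix M(G) ∈ ℂ^{n×n} has constant (complex number) entries, and let S be a structural set of G. Then: (i) σ(G|_{S̄}) equals the multiset of diagonal entries {ω(e_{ii}) : i ∉ S}; (ii) σ⁻¹(G|_{S̄}) = ∅; and (iii) σ(R_S(G)) = σ(G) − σ(G|_{S̄}), where − is multiset difference (subtracting multiplicities, truncated at zero). -/
/-!
Write `λ` for `RatFunc.X` and, for `j ∈ S`, let `F u j` be the sum of the weights `innerProd` of all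
simple paths from `u` to `j` that avoid `S` before their endpoint (`pathSum`). Removing the first
vertex of a path gives `F t j = ∑ u ≠ t, A t u / (λ - A t t) * F u j` for `t ∉ S`
(`pathSum_of_notMem`); prepending `t` never destroys simplicity, since a repetition of `t` would
close up to a nonloop cycle avoiding `S` (`cons_nodup`). Equivalently, row `t` of `(A - λ) F`
vanishes. In the same way a branch is an edge followed by such a path, so that for `i ∈ S` row `i`
of `A F` is row `i` of the reduction (`reduce_eq`).

Completing the columns of `F` by unit vectors outside `S` gives a block unitriangular matrix `E` such
that `(A - λ) E` is block triangular with diagonal blocks `R_S - λ` and `A|_Sᶜ - λ`. Taking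
determinants, `charRat A = charRat R_S * charRat A|_Sᶜ` (`charRat_eq_mul`). The last factor is the
product of its diagonal entries, because a nontrivial permutation contributing to the Leibniz
expansion would contain a nonloop cycle avoiding `S` (`charRat_restrictC`). Both `charRat A` and
`charRat A|_Sᶜ` are nonzero polynomials, and comparing roots yields the three claims.
-/

open scoped BigOperators

abbrev Wl : Type := RatFunc ℂ

def IsCycle {n : ℕ} (A : Matrix (Fin n) (Fin n) Wl) (l : List (Fin n)) : Prop :=
  l ≠ [] ∧ l.Nodup ∧ l.Chain' (fun u v => A u v ≠ 0) ∧
    ∀ u v : Fin n, l.head? = some u → l.getLast? = some v → A v u ≠ 0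

def IsStructuralSet {n : ℕ} (A : Matrix (Fin n) (Fin n) Wl) (S : Finset (Fin n)) : Prop :=
  S.Nonempty ∧ (∀ l, IsCycle A l → 2 ≤ l.length → ∃ v ∈ l, v ∈ S) ∧
    ∀ i, i ∉ S → A i i ≠ RatFunc.X

def IsBranch {n : ℕ} (A : Matrix (Fin n) (Fin n) Wl) (S : Finset (Fin n)) (i j : Fin n)
    (l : List (Fin n)) : Prop :=
  2 ≤ l.length ∧ l.head? = some i ∧ l.getLast? = some j ∧ i ∈ S ∧ j ∈ S ∧
    l.Chain' (fun u v => A u v ≠ 0) ∧ (∀ v ∈ l.tail.dropLast, v ∉ S) ∧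
    l.dropLast.Nodup ∧ l.tail.Nodup

noncomputable def innerProd {n : ℕ} (A : Matrix (Fin n) (Fin n) Wl) : List (Fin n) → Wl
  | u :: v :: rest => A u v / (RatFunc.X - A u u) * innerProd A (v :: rest)
  | _ => 1

noncomputable def branchProd {n : ℕ} (A : Matrix (Fin n) (Fin n) Wl) : List (Fin n) → Wl
  | u :: v :: rest => A u v * innerProd A (v :: rest)
  | _ => 0

noncomputable def reduce {n : ℕ} (A : Matrix (Fin n) (Fin n) Wl) (S : Finset (Fin n)) :
    Matrix (Fin n) (Fin n) Wl :=
  Matrix.of fun i j => ∑ᶠ l ∈ {l : List (Fin n) | IsBranch A S i j l}, branchProd A l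

noncomputable def charRat {V : Type} [Fintype V] [DecidableEq V] (A : Matrix V V Wl) : Wl :=
  (A - Matrix.diagonal (fun _ => (RatFunc.X : Wl))).det

noncomputable def spec {V : Type} [Fintype V] [DecidableEq V] (A : Matrix V V Wl) : Multiset ℂ :=
  (charRat A).num.roots - (charRat A).denom.roots

noncomputable def ispec {V : Type} [Fintype V] [DecidableEq V] (A : Matrix V V Wl) : Multiset ℂ :=
  (charRat A).denom.roots - (charRat A).num.roots

noncomputable def reduceSub {n : ℕ} (A : Matrix (Fin n) (Fin n) Wl) (S : Finset (Fin n)) :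
    Matrix {i // i ∈ S} {i // i ∈ S} Wl :=
  (reduce A S).submatrix Subtype.val Subtype.val

def restrictC {n : ℕ} (A : Matrix (Fin n) (Fin n) Wl) (S : Finset (Fin n)) :
    Matrix {i // i ∈ Sᶜ} {i // i ∈ Sᶜ} Wl :=
  A.submatrix Subtype.val Subtype.val

/-! ### Paths into the structural set -/

/-- The simple paths from `u` to `j` none of whose vertices, except possibly the last one, is in
`S`. The one-vertex path `[j]` is allowed. -/
def pathSet {n : ℕ} (A : Matrix (Fin n) (Fin n) Wl) (S : Finset (Fin n)) (u j : Fin n) :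
    Set (List (Fin n)) :=
  {l | l.head? = some u ∧ l.getLast? = some j ∧ l.IsChain (fun u v => A u v ≠ 0) ∧
    (∀ v ∈ l.dropLast, v ∉ S) ∧ l.Nodup}

/-- The total weight of the paths in `pathSet A S u j`, each weighted by `innerProd`. -/
noncomputable def pathSum {n : ℕ} (A : Matrix (Fin n) (Fin n) Wl) (S : Finset (Fin n))
    (u j : Fin n) : Wl :=
  ∑ᶠ l ∈ pathSet A S u j, innerProd A l

lemma pathSet_finite {n : ℕ} (A : Matrix (Fin n) (Fin n) Wl) (S : Finset (Fin n)) (u j : Fin n) :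
    (pathSet A S u j).Finite :=
  (List.finite_length_le (Fin n) (Fintype.card (Fin n))).subset
    fun _ hl => hl.2.2.2.2.length_le_card

lemma pathSum_self {n : ℕ} (A : Matrix (Fin n) (Fin n) Wl) (S : Finset (Fin n)) {j : Fin n}
    (hj : j ∈ S) : pathSum A S j j = 1 := by
  have : pathSet A S j j = {[j]} := by
    ext l
    constructor
    · rintro ⟨h1, -, -, h4, -⟩
      match l, h1, h4 with
      | [a], h1, _ => simpa using h1
      | a :: b :: r, h1, h4 =>
        obtain rfl : a = j := by simpa using h1
        exact absurd hj (h4 a (by simp))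
    · rintro rfl
      simp [pathSet]
  simp [pathSum, this, innerProd]

lemma pathSum_of_ne {n : ℕ} (A : Matrix (Fin n) (Fin n) Wl) (S : Finset (Fin n)) {i j : Fin n}
    (hi : i ∈ S) (hij : i ≠ j) : pathSum A S i j = 0 := by
  have : pathSet A S i j = ∅ := by
    ext l
    simp only [Set.mem_empty_iff_false, iff_false]
    rintro ⟨h1, h2, -, h4, -⟩
    match l, h1, h2, h4 with
    | [a], h1, h2, _ => simp at h1 h2; exact hij (h1.symm.trans h2)
    | a :: b :: r, h1, _, h4 =>
      obtain rfl : a = i := by simpa using h1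
      exact h4 a (by simp) hi
  simp [pathSum, this]

/-- Sorting a finite set of lists with common first vertex `i` by their second vertex. -/
lemma finsum_cons {n : ℕ} (A : Matrix (Fin n) (Fin n) Wl) (S : Finset (Fin n)) (i j : Fin n)
    (p : Fin n → Prop) [DecidablePred p] (Q : Set (List (Fin n))) (f : List (Fin n) → Wl)
    (hQ : ∀ l, l ∈ Q ↔ ∃ u, p u ∧ ∃ l' ∈ pathSet A S u j, i :: l' = l) :
    ∑ᶠ l ∈ Q, f l = ∑ u, if p u then ∑ᶠ l ∈ pathSet A S u j, f (i :: l) else 0 := by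
  have hQ' : Q = ⋃ u, (fun l => i :: l) '' {l | p u ∧ l ∈ pathSet A S u j} := by
    ext l
    rw [hQ]
    simp only [Set.mem_iUnion, Set.mem_image, Set.mem_ofPred_eq]
    constructor
    · rintro ⟨u, hu, l', hl', rfl⟩
      exact ⟨u, l', ⟨hu, hl'⟩, rfl⟩
    · rintro ⟨u, l', ⟨hu, hl'⟩, rfl⟩
      exact ⟨u, hu, l', hl', rfl⟩
  rw [hQ', finsum_mem_iUnion, finsum_eq_sum_of_fintype]
  · refine Finset.sum_congr rfl fun u _ => ?_
    rw [finsum_mem_image (fun a _ b _ h => by simpa using h)]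
    by_cases hu : p u <;> simp [hu]
  · intro u v huv
    rw [Function.onFun, Set.disjoint_left]
    rintro _ ⟨l, ⟨-, hl⟩, rfl⟩ ⟨l', ⟨-, hl'⟩, h⟩
    obtain rfl : l' = l := by simpa using h
    exact huv (Option.some_injective _ (hl.1.symm.trans hl'.1))
  · intro u
    exact ((pathSet_finite A S u j).subset fun l hl => hl.2).image _

/-- Prepending a vertex outside `S` to a path keeps the path simple: a second occurrence of `t`
would give a cycle of length at least two that avoids `S`. -/
lemma cons_nodup {n : ℕ} {A : Matrix (Fin n) (Fin n) Wl} {S : Finset (Fin n)}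
    (hS : IsStructuralSet A S) {t u j : Fin n} (ht : t ∉ S) (hj : j ∈ S) (htu : u ≠ t)
    (hA : A t u ≠ 0) {l : List (Fin n)} (hl : l ∈ pathSet A S u j) : (t :: l).Nodup := by
  obtain ⟨h1, h2, h3, h4, h5⟩ := hl
  refine List.nodup_cons.2 ⟨fun hmem => ?_, h5⟩
  obtain ⟨l₁, l₂, rfl⟩ := List.append_of_mem hmem
  have hl₂ : l₂ ≠ [] := by
    rintro rfl
    simp at h2
    exact ht (h2 ▸ hj)
  have hl₁ : l₁ ≠ [] := by
    rintro rfl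
    simp at h1
    exact htu h1.symm
  have hch : (t :: (l₁ ++ t :: l₂)).IsChain (fun u v => A u v ≠ 0) := by
    rw [List.isChain_cons]
    refine ⟨fun y hy => ?_, h3⟩
    rw [h1] at hy
    obtain rfl : u = y := by simpa using hy
    exact hA
  rw [← List.cons_append, List.isChain_append] at hch
  have hnd := List.nodup_append.1 h5
  have hcyc : IsCycle A (t :: l₁) := by
    refine ⟨by simp, ?_, hch.1, ?_⟩
    · exact List.nodup_cons.2 ⟨fun h => hnd.2.2 t h t (by simp) rfl, hnd.1⟩
    · intro a b ha hb
      obtain rfl : t = a := by simpa using ha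
      exact hch.2.2 b hb t (by simp)
  have hlen : 2 ≤ (t :: l₁).length := by
    have := List.length_pos_iff.2 hl₁
    simp; omega
  obtain ⟨v, hv, hvS⟩ := hS.2.1 _ hcyc hlen
  rcases List.mem_cons.1 hv with rfl | hv
  · exact ht hvS
  · refine h4 v ?_ hvS
    rw [List.dropLast_append_of_ne_nil (by simp)]
    exact List.mem_append_left _ hv

lemma pathSum_of_notMem {n : ℕ} {A : Matrix (Fin n) (Fin n) Wl} {S : Finset (Fin n)}
    (hS : IsStructuralSet A S) {t j : Fin n} (ht : t ∉ S) (hj : j ∈ S) :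
    pathSum A S t j =
      ∑ u, if u ≠ t then A t u / (RatFunc.X - A t t) * pathSum A S u j else 0 := by
  classical
  rw [pathSum, finsum_cons A S t j (fun u => u ≠ t ∧ A t u ≠ 0)]
  · refine Finset.sum_congr rfl fun u _ => ?_
    by_cases hu : u = t
    · simp [hu]
    by_cases hA : A t u = 0
    · simp [hA]
    rw [if_pos ⟨hu, hA⟩, if_pos hu, pathSum, mul_finsum_mem]
    refine finsum_mem_congr rfl fun l hl => ?_
    match l, hl.1 with
    | a :: r, h =>
      obtain rfl : a = u := by simpa using h
      rfl
  · intro l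
    constructor
    · rintro ⟨h1, h2, h3, h4, h5⟩
      match l, h1, h2, h3, h4, h5 with
      | [a], h1, h2, _, _, _ =>
        simp at h1 h2
        exact absurd hj (by rwa [← h2, h1])
      | a :: b :: r, h1, h2, h3, h4, h5 =>
        obtain rfl : a = t := by simpa using h1
        rw [List.isChain_cons_cons] at h3
        have hn := List.nodup_cons.1 h5
        refine ⟨b, ⟨fun h => hn.1 (by simp [h]), h3.1⟩, b :: r, ⟨rfl, ?_, h3.2, ?_, hn.2⟩, rfl⟩
        · simpa using h2
        · intro v hv
          exact h4 v (by simp [hv])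
    · rintro ⟨u, ⟨hu, hA⟩, l', hl', rfl⟩
      have hnd := cons_nodup hS ht hj hu hA hl'
      obtain ⟨h1, h2, h3, h4, -⟩ := hl'
      match l', h1, h2, h3, h4, hnd with
      | a :: r, h1, h2, h3, h4, hnd =>
        obtain rfl : a = u := by simpa using h1
        refine ⟨rfl, by simpa using h2, List.isChain_cons_cons.2 ⟨hA, h3⟩, ?_, hnd⟩
        intro v hv
        rw [List.dropLast_cons_cons, List.mem_cons] at hv
        rcases hv with rfl | hv
        · exact ht
        · exact h4 v hv

/-- A branch is an edge out of `i` followed by a path into `S`. -/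
lemma reduce_eq {n : ℕ} (A : Matrix (Fin n) (Fin n) Wl) (S : Finset (Fin n))
    {i j : Fin n} (hi : i ∈ S) (hj : j ∈ S) :
    reduce A S i j = ∑ u, A i u * pathSum A S u j := by
  classical
  rw [reduce, Matrix.of_apply, finsum_cons A S i j (fun u => A i u ≠ 0)]
  · refine Finset.sum_congr rfl fun u _ => ?_
    by_cases hA : A i u = 0
    · simp [hA]
    rw [if_pos hA, pathSum, mul_finsum_mem]
    refine finsum_mem_congr rfl fun l hl => ?_
    match l, hl.1 with
    | a :: r, h =>
      obtain rfl : a = u := by simpa using h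
      rfl
  · intro l
    constructor
    · rintro ⟨h0, h1, h2, -, -, h3, h4, -, h5⟩
      match l, h0, h1, h2, h3, h4, h5 with
      | a :: b :: r, h0, h1, h2, h3, h4, h5 =>
        obtain rfl : a = i := by simpa using h1
        have h3' := List.isChain_cons_cons.1 h3
        exact ⟨b, h3'.1, b :: r, ⟨rfl, by simpa using h2, h3'.2, h4, h5⟩, rfl⟩
    · rintro ⟨u, hA, l', ⟨h1, h2, h3, h4, h5⟩, rfl⟩
      match l', h1, h2, h3, h4, h5 with
      | a :: r, h1, h2, h3, h4, h5 =>
        obtain rfl : a = u := by simpa using h1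
        refine ⟨by simp, rfl, by simpa using h2, hi, hj, List.isChain_cons_cons.2 ⟨hA, h3⟩, h4,
          ?_, h5⟩
        rw [List.dropLast_cons_cons]
        exact List.nodup_cons.2 ⟨fun h => h4 i h hi, h5.sublist (List.dropLast_sublist _)⟩

/-! ### Determinants -/

lemma charRat_eq_mul {n : ℕ} {A : Matrix (Fin n) (Fin n) Wl} {S : Finset (Fin n)}
    (hS : IsStructuralSet A S) :
    charRat A = charRat (reduceSub A S) * charRat (restrictC A S) := by
  obtain ⟨M, hM⟩ : ∃ M : Matrix (Fin n) (Fin n) Wl,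
      M = A - Matrix.diagonal (fun _ => (RatFunc.X : Wl)) := ⟨_, rfl⟩
  obtain ⟨E, hE⟩ : ∃ E : Matrix (Fin n) (Fin n) Wl, E = Matrix.of fun u j =>
      if j ∈ S then pathSum A S u j else (1 : Matrix _ _ Wl) u j := ⟨_, rfl⟩
  have hMapp : ∀ i (v : Fin n → Wl), ∑ u, M i u * v u = ∑ u, A i u * v u - RatFunc.X * v i := by
    intro i v
    simp [hM, sub_mul, Finset.sum_sub_distrib, Matrix.diagonal_apply]
  have hME : ∀ i j, j ∈ S → (M * E) i j = ∑ u, A i u * pathSum A S u j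
      - RatFunc.X * pathSum A S i j := by
    intro i j hj
    rw [← hMapp i (fun u => pathSum A S u j), Matrix.mul_apply]
    simp [hE, hj]
  have hME' : ∀ i j, j ∉ S → (M * E) i j = M i j := by
    intro i j hj
    rw [Matrix.mul_apply]
    simp [hE, hj, Matrix.one_apply]
  have hE0 : ∀ i j, i ∈ S → E i j = (1 : Matrix _ _ Wl) i j := by
    intro i j hi
    by_cases hj : j ∈ S
    · by_cases hij : i = j
      · subst hij; simp [hE, hj, pathSum_self A S hj]
      · simp [hE, hj, pathSum_of_ne A S hi hij, hij]
    · simp [hE, hj]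
  have hEdet : E.det = 1 := by
    rw [Matrix.twoBlockTriangular_det' E (fun i => i ∈ S)]
    · have e1 : E.toSquareBlockProp (fun i => i ∈ S) = 1 := by
        ext i j
        change E i j = _
        rw [hE0 i j i.2, Matrix.one_apply, Matrix.one_apply]
        simp only [Subtype.ext_iff]
      have e2 : E.toSquareBlockProp (fun i => ¬ i ∈ S) = 1 := by
        ext i j
        change E i j = _
        rw [hE, Matrix.of_apply, if_neg j.2, Matrix.one_apply, Matrix.one_apply]
        simp only [Subtype.ext_iff]
      rw [e1, e2]; simp
    · intro i hi j hj
      rw [hE0 i j hi, Matrix.one_apply_ne]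
      rintro rfl
      exact hj hi
  have h0 : ∀ i, i ∉ S → ∀ j, j ∈ S → (M * E) i j = 0 := by
    intro i hi j hj
    have hX : (RatFunc.X : Wl) - A i i ≠ 0 := sub_ne_zero.2 (hS.2.2 i hi).symm
    have hrec := pathSum_of_notMem hS hi hj
    rw [← Finset.sum_filter, Finset.filter_ne'] at hrec
    rw [hME i j hj, ← Finset.add_sum_erase _ _ (Finset.mem_univ i)]
    have : ∑ u ∈ Finset.univ.erase i, A i u * pathSum A S u j
        = (RatFunc.X - A i i) * pathSum A S i j := by
      conv_rhs => rw [hrec]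
      rw [Finset.mul_sum]
      refine Finset.sum_congr rfl fun u _ => ?_
      field_simp
    rw [this]; ring
  have hdet : M.det = (M * E).det := by rw [Matrix.det_mul, hEdet, mul_one]
  rw [charRat, ← hM, hdet, Matrix.twoBlockTriangular_det (M * E) (fun i => i ∈ S) h0]
  have h1 : ((M * E).toSquareBlockProp fun i => i ∈ S) =
      reduceSub A S - Matrix.diagonal (fun _ => (RatFunc.X : Wl)) := by
    ext i j
    have hp : pathSum A S i j = if i = j then 1 else 0 := by
      have := hE0 i j i.2
      rw [hE, Matrix.of_apply, if_pos j.2, Matrix.one_apply] at this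
      simpa only [Subtype.ext_iff] using this
    change (M * E) i j = reduce A S i j - Matrix.diagonal (fun _ => (RatFunc.X : Wl)) i j
    rw [hME i j j.2, reduce_eq A S i.2 j.2, hp, Matrix.diagonal_apply, mul_ite, mul_one, mul_zero]
  have h2 : ((M * E).toSquareBlockProp fun i => ¬ i ∈ S) =
      (restrictC A S - Matrix.diagonal (fun _ => (RatFunc.X : Wl))).submatrix
        (Equiv.subtypeEquivRight (fun i => (Finset.mem_compl (s := S) (a := i)).symm))
        (Equiv.subtypeEquivRight (fun i => (Finset.mem_compl (s := S) (a := i)).symm)) := by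
    ext i j
    have hd : Matrix.diagonal (fun _ : Fin n => (RatFunc.X : Wl)) i j =
        Matrix.diagonal (fun _ : {i // i ∈ Sᶜ} => (RatFunc.X : Wl))
          ⟨i, Finset.mem_compl.2 i.2⟩ ⟨j, Finset.mem_compl.2 j.2⟩ := by
      rw [Matrix.diagonal_apply, Matrix.diagonal_apply]
      simp only [Subtype.mk.injEq]
    have hij : (M * E) i j = M i j := hME' i j j.2
    refine hij.trans ?_
    rw [hM]
    exact congrArg (A i j - ·) hd
  rw [h1, h2, Matrix.det_submatrix_equiv_self]
  unfold charRat
  congr!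

/-- Only the identity permutation contributes to the determinant outside a structural set. -/
lemma charRat_restrictC {n : ℕ} {A : Matrix (Fin n) (Fin n) Wl} {S : Finset (Fin n)}
    (hS : IsStructuralSet A S) :
    charRat (restrictC A S) = ∏ i ∈ Sᶜ, (A i i - RatFunc.X) := by
  rw [charRat, Matrix.det_apply, Finset.sum_eq_single 1]
  · rw [← Finset.prod_coe_sort Sᶜ]
    simp [restrictC]
  · intro σ _ hσ
    by_contra hne
    have hprod : ∀ i, (restrictC A S - Matrix.diagonal (fun _ => (RatFunc.X : Wl)) :
        Matrix {i // i ∈ Sᶜ} {i // i ∈ Sᶜ} Wl) (σ i) i ≠ 0 := by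
      intro i hi
      refine hne ?_
      convert smul_zero _
      exact Finset.prod_eq_zero (Finset.mem_univ i) hi
    -- `det_apply` uses the entries `(σ i, i)`, so the edges run along the cycles of `σ⁻¹`.
    set p := σ⁻¹ with hp
    have hp1 : p ≠ 1 := by simpa [hp] using hσ
    have hedge : ∀ y, p y ≠ y → A y (p y) ≠ 0 := by
      intro y hy
      have h := hprod (p y)
      have hσy : σ (p y) = y := by simp [hp]
      rw [hσy] at h
      simpa [restrictC, Matrix.diagonal_apply, Ne.symm hy] using h
    obtain ⟨x, hx⟩ : ∃ x, p x ≠ x := by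
      by_contra! h
      exact hp1 (Equiv.ext h)
    have hxs : x ∈ p.support := Equiv.Perm.mem_support.2 hx
    have hpow : ∀ k : ℕ, A ((p ^ k) x) ((p ^ (k + 1)) x) ≠ 0 := by
      intro k
      rw [pow_succ', Equiv.Perm.mul_apply]
      exact hedge _ (Equiv.Perm.mem_support.1 (Equiv.Perm.pow_apply_mem_support.2 hxs))
    have hlen : 2 ≤ (p.toList x).length :=
      Equiv.Perm.two_le_length_toList_iff_mem_support.2 hxs
    have hcyc : IsCycle A ((p.toList x).map Subtype.val) := by
      refine ⟨fun h => ?_, (Equiv.Perm.nodup_toList p x).map Subtype.val_injective, ?_, ?_⟩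
      · rw [List.map_eq_nil_iff] at h
        simp [h] at hlen
      · refine List.isChain_iff_getElem.2 fun k hk => ?_
        simpa [Equiv.Perm.getElem_toList] using hpow k
      · intro a b ha hb
        rw [List.head?_eq_getElem?, List.getElem?_eq_getElem (by simp; omega)] at ha
        rw [List.getLast?_eq_getElem?, List.getElem?_eq_getElem (by simp; omega)] at hb
        simp only [List.getElem_map, Equiv.Perm.getElem_toList, Option.some.injEq,
          List.length_map] at ha hb
        have h := hpow ((p.toList x).length - 1)
        rw [Nat.sub_add_cancel (by omega), hb, ← Equiv.Perm.pow_mod_card_support_cycleOf_self_apply,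
          Equiv.Perm.length_toList, Nat.mod_self, ha] at h
        exact h
    obtain ⟨v, hv, hvS⟩ := hS.2.1 _ hcyc (by simpa using hlen)
    obtain ⟨w, -, rfl⟩ := List.mem_map.1 hv
    exact Finset.mem_compl.1 w.2 hvS
  · simp

/-! ### Roots of numerators and denominators -/

lemma spec_of_poly {V : Type} [Fintype V] [DecidableEq V] {A : Matrix V V Wl}
    {q : Polynomial ℂ} (h : charRat A = algebraMap _ _ q) : spec A = q.roots := by
  simp [spec, h]

lemma ispec_of_poly {V : Type} [Fintype V] [DecidableEq V] {A : Matrix V V Wl}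
    {q : Polynomial ℂ} (h : charRat A = algebraMap _ _ q) : ispec A = 0 := by
  simp [ispec, h]

/-- The cross-multiplied identity `num * q = p * denom` already determines the truncated difference
of the root multisets. -/
lemma num_roots_sub_denom_roots {r : Wl} {p q : Polynomial ℂ} (hp : p ≠ 0) (hq : q ≠ 0)
    (h : algebraMap _ Wl p = r * algebraMap _ Wl q) :
    r.num.roots - r.denom.roots = p.roots - q.roots := by
  have hd : r.denom ≠ 0 := r.denom_ne_zero
  have hd' : algebraMap (Polynomial ℂ) Wl r.denom ≠ 0 := by
    simpa using hd
  have key : r.num * q = p * r.denom := by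
    apply RatFunc.algebraMap_injective ℂ
    rw [map_mul, map_mul, h]
    nth_rewrite 2 [← RatFunc.num_div_denom r]
    field_simp
  have hn : r.num * q ≠ 0 := by rw [key]; exact mul_ne_zero hp hd
  have hr := congrArg Polynomial.roots key
  rw [Polynomial.roots_mul hn, Polynomial.roots_mul (mul_ne_zero hp hd)] at hr
  ext a
  have := congrArg (Multiset.count a) hr
  simp only [Multiset.count_add, Multiset.count_sub] at this ⊢
  omega

lemma charRat_map_C {n : ℕ} (B : Matrix (Fin n) (Fin n) ℂ) :
    charRat (B.map (fun z => RatFunc.C z)) =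
      algebraMap (Polynomial ℂ) Wl ((-1) ^ n * B.charpoly) := by
  have h : B.map (fun z => RatFunc.C z) - Matrix.diagonal (fun _ => (RatFunc.X : Wl)) =
      -((algebraMap (Polynomial ℂ) Wl).mapMatrix B.charmatrix) := by
    ext i j
    by_cases hij : i = j
    · subst hij; simp [RatFunc.algebraMap_C, RatFunc.algebraMap_X]
    · simp [hij, RatFunc.algebraMap_C]
  rw [charRat, h, Matrix.det_neg, ← RingHom.map_det]
  simp [Matrix.charpoly]

theorem stmt2 {n : ℕ} (B : Matrix (Fin n) (Fin n) ℂ) (A : Matrix (Fin n) (Fin n) Wl)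
    (hA : A = B.map (fun z => RatFunc.C z)) (S : Finset (Fin n))
    (hS : IsStructuralSet A S) :
    spec (restrictC A S) = Multiset.map (fun i => B i i) Sᶜ.val ∧
    ispec (restrictC A S) = 0 ∧
    spec (reduceSub A S) = spec A - spec (restrictC A S) := by
  set q : Polynomial ℂ := ∏ i ∈ Sᶜ, -(Polynomial.X - Polynomial.C (B i i))
  have hq0 : q ≠ 0 :=
    Finset.prod_ne_zero_iff.2 fun i _ => neg_ne_zero.2 (Polynomial.X_sub_C_ne_zero _)
  have hR : charRat (restrictC A S) = algebraMap _ _ q := by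
    rw [charRat_restrictC hS, map_prod, hA]
    refine Finset.prod_congr rfl fun i _ => ?_
    simp [RatFunc.algebraMap_C, RatFunc.algebraMap_X]
  have hqr : q.roots = Multiset.map (fun i => B i i) Sᶜ.val := by
    rw [Polynomial.roots_prod _ _ hq0]
    simp only [Polynomial.roots_neg, Polynomial.roots_X_sub_C, Multiset.bind_singleton]
  have hp : charRat A = algebraMap _ _ ((-1) ^ n * B.charpoly) := by
    rw [hA, charRat_map_C]
  have hp0 : (-1) ^ n * B.charpoly ≠ 0 :=
    mul_ne_zero (pow_ne_zero _ (by simp)) B.charpoly_monic.ne_zero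
  refine ⟨(spec_of_poly hR).trans hqr, ispec_of_poly hR, ?_⟩
  rw [spec_of_poly hR, spec_of_poly hp, spec]
  exact num_roots_sub_denom_roots hp0 hq0 (by rw [← hp, ← hR, charRat_eq_mul hS])
end

section
/- If G is a weighted digraph in the class G_π (every edge weight p/q ∈ W satisfies deg p ≤ deg q) and S is a structural set of G, then every edge weight of the isospectral reduction R_S(G) again lies in W_π, i.e. R_S(G) ∈ G_π. In particular, no loop of R_S(G) has weight equal to the rational function λ. -/
/-!
The set `W_π` is the subring of `ℂ(λ)` of functions of nonpositive degree, i.e. those regular at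
infinity. If `a ∈ W_π` then `λ - a` has degree `1`, so `1 / (λ - a)` lies in `W_π` again
(`wpi_inv_X_sub`). Every branch product is a product of weights and of such inverses, and every
entry of the reduction is a sum of branch products, so it lies in `W_π`. Finally `λ ∉ W_π`.
-/

open scoped BigOperators

/-- `w ∈ W_π`: the degree of the numerator is at most the degree of the denominator
(numerator and denominator are in lowest terms). -/
def Wpi (w : Wl) : Prop := w.num.degree ≤ w.denom.degree

/-- `G ∈ G_π`: every edge weight lies in `W_π`. -/
def Gpi {n : ℕ} (A : Matrix (Fin n) (Fin n) Wl) : Prop := ∀ i j, Wpi (A i j)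

theorem wpi_iff_intDegree (w : Wl) : Wpi w ↔ w.intDegree ≤ 0 := by
  unfold Wpi RatFunc.intDegree
  by_cases hw : w = 0
  · simp [hw]
  · rw [Polynomial.degree_eq_natDegree (RatFunc.num_ne_zero hw),
      Polynomial.degree_eq_natDegree w.denom_ne_zero, Nat.cast_le]
    omega

theorem wpi_zero : Wpi 0 := by simp [wpi_iff_intDegree]

theorem wpi_one : Wpi 1 := by simp [wpi_iff_intDegree]

theorem not_wpi_X : ¬ Wpi RatFunc.X := by simp [wpi_iff_intDegree]

theorem Wpi.mul {a b : Wl} (ha : Wpi a) (hb : Wpi b) : Wpi (a * b) := by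
  by_cases ha0 : a = 0
  · simpa [ha0] using wpi_zero
  by_cases hb0 : b = 0
  · simpa [hb0] using wpi_zero
  rw [wpi_iff_intDegree] at *
  rw [RatFunc.intDegree_mul ha0 hb0]
  omega

theorem Wpi.add {a b : Wl} (ha : Wpi a) (hb : Wpi b) : Wpi (a + b) := by
  by_cases hb0 : b = 0
  · simpa [hb0] using ha
  by_cases hab : a + b = 0
  · simpa [hab] using wpi_zero
  rw [wpi_iff_intDegree] at *
  exact (RatFunc.intDegree_add_le hb0 hab).trans (max_le ha hb)

/-- If `λ - a` had negative degree, it would lie in `W_π`, and so would `λ = (λ - a) + a`.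
For `a = λ` the hypothesis fails, so `λ - a ≠ 0` here. -/
theorem wpi_inv_X_sub {a : Wl} (ha : Wpi a) : Wpi (RatFunc.X - a)⁻¹ := by
  rw [wpi_iff_intDegree, RatFunc.intDegree_inv]
  by_contra! h
  refine not_wpi_X ?_
  have h' : Wpi (RatFunc.X - a) := by
    rw [wpi_iff_intDegree]
    omega
  simpa using h'.add ha

theorem wpi_innerProd {n : ℕ} {A : Matrix (Fin n) (Fin n) Wl} (hA : Gpi A) :
    ∀ l, Wpi (innerProd A l)
  | [] => by simpa [innerProd] using wpi_one
  | [_] => by simpa [innerProd] using wpi_one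
  | u :: v :: rest => by
    rw [innerProd, div_eq_mul_inv]
    exact ((hA u v).mul (wpi_inv_X_sub (hA u u))).mul (wpi_innerProd hA (v :: rest))

theorem wpi_branchProd {n : ℕ} {A : Matrix (Fin n) (Fin n) Wl} (hA : Gpi A) :
    ∀ l, Wpi (branchProd A l)
  | [] => by simpa [branchProd] using wpi_zero
  | [_] => by simpa [branchProd] using wpi_zero
  | u :: v :: rest => (hA u v).mul (wpi_innerProd hA (v :: rest))

theorem stmt3 {n : ℕ} (A : Matrix (Fin n) (Fin n) Wl) (S : Finset (Fin n))
    (hA : Gpi A) (hS : IsStructuralSet A S) :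
    Gpi (reduce A S) ∧ ∀ i, reduce A S i i ≠ RatFunc.X := by
  have h : Gpi (reduce A S) := fun i j =>
    finsum_mem_induction Wpi wpi_zero (fun _ _ => Wpi.add) fun l _ => wpi_branchProd hA l
  exact ⟨h, fun i hi => not_wpi_X (hi ▸ h i i)⟩
end

section
/- Let (𝓕, X) be a dynamical network, 𝓕 = F ∘ T, with Lipschitz data L_1,…,L_n for the local maps and Λ_{ij} for the interaction, and let M_𝓕 = Λᵀ·diag(L_1,…,L_n), i.e. (M_𝓕)_{ji} = Λ_{ij}L_i. If the spectral radius ρ(M_𝓕) < 1, then 𝓕 has a globally attracting fixed point: there exists x̃ ∈ X with 𝓕(x̃) = x̃ and d_max(𝓕^k(x), x̃) → 0 as k → ∞ for every x ∈ X. -/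
/-!
Write `G = F ∘ T` and let `A` be the nonnegative matrix `A j i = Λ i j * L i`. The vector of
componentwise distances of `G x` and `G y` is bounded by `A` applied to that of `x` and `y`; as `A`
is nonnegative this iterates (`dist_iterate_le`), so `G^[k]` is Lipschitz for the max metric with
constant the `ℓ^∞` operator norm `‖A ^ k‖`. Gelfand's formula turns `ρ(A) < 1` into `‖A ^ k‖ → 0`
(`tendsto_norm_pow_of_spectralRadius_lt_one`). Hence some iterate of `G` is a contraction, whose
fixed point given by Banach's theorem is fixed by `G` too, and the same bound shows that all orbits
converge to it.
-/

open scoped BigOperators ENNReal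
open Filter Topology

/-- In a complex Banach algebra, the powers of an element of spectral radius `< 1` tend to `0`:
by Gelfand's formula, `‖a ^ k‖ ≤ r ^ k` eventually, for any `r` strictly between the spectral
radius and `1`. -/
lemma tendsto_norm_pow_of_spectralRadius_lt_one {A : Type*} [NormedRing A] [NormedAlgebra ℂ A]
    [CompleteSpace A] (a : A) (h : spectralRadius ℂ a < 1) :
    Tendsto (fun k : ℕ => ‖a ^ k‖) atTop (𝓝 0) := by
  obtain ⟨r, hr, hr1⟩ := ENNReal.lt_iff_exists_nnreal_btwn.1 h
  have hr1' : r < 1 := by exact_mod_cast hr1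
  have hg := (spectrum.pow_nnnorm_pow_one_div_tendsto_nhds_spectralRadius a).eventually
    (gt_mem_nhds hr)
  refine squeeze_zero' (Eventually.of_forall fun k => norm_nonneg _) ?_
    (tendsto_pow_atTop_nhds_zero_of_lt_one r.coe_nonneg (by exact_mod_cast hr1'))
  filter_upwards [hg, eventually_gt_atTop 0] with k hk hk0
  have hk' : (0 : ℝ) < k := by exact_mod_cast hk0
  have h1 : ((‖a ^ k‖₊ : ℝ≥0∞) ^ (1 / k : ℝ)) ^ (k : ℝ) ≤ (r : ℝ≥0∞) ^ (k : ℝ) :=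
    ENNReal.rpow_le_rpow hk.le hk'.le
  rw [← ENNReal.rpow_mul, one_div_mul_cancel hk'.ne', ENNReal.rpow_one,
    ENNReal.rpow_natCast] at h1
  exact_mod_cast h1

/-- A componentwise Lipschitz bound by a nonnegative matrix passes to iterates and matrix
powers. -/
lemma dist_iterate_le {ι : Type*} [Fintype ι] [DecidableEq ι] {X : ι → Type*}
    [∀ i, PseudoMetricSpace (X i)] (G : (∀ i, X i) → ∀ i, X i) (A : Matrix ι ι ℝ)
    (hA : ∀ j i, 0 ≤ A j i)
    (hG : ∀ x y j, dist (G x j) (G y j) ≤ ∑ i, A j i * dist (x i) (y i)) (k : ℕ) :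
    ∀ x y j, dist (G^[k] x j) (G^[k] y j) ≤ ∑ i, (A ^ k) j i * dist (x i) (y i) := by
  induction k with
  | zero => intro x y j; simp [Matrix.one_apply]
  | succ k ih =>
    intro x y j
    rw [Function.iterate_succ_apply', Function.iterate_succ_apply', pow_succ']
    calc _ ≤ ∑ i, A j i * dist (G^[k] x i) (G^[k] y i) := hG _ _ _
      _ ≤ ∑ i, A j i * ∑ l, (A ^ k) i l * dist (x l) (y l) :=
        Finset.sum_le_sum fun i _ => mul_le_mul_of_nonneg_left (ih x y i) (hA j i)
      _ = _ := by
        simp_rw [Matrix.mul_apply, Finset.sum_mul, Finset.mul_sum]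
        rw [Finset.sum_comm]
        simp_rw [mul_assoc]

section

-- The `ℓ^∞` operator norm of a matrix: the largest absolute row sum.
attribute [local instance] Matrix.linftyOpNormedRing Matrix.linftyOpNormedAlgebra

/-- The Lipschitz constants are taken from the complexification of `A`, to which Gelfand's formula
applies. -/
lemma exists_lipschitz_iterate {ι : Type*} [Fintype ι] [DecidableEq ι] {X : ι → Type*}
    [∀ i, PseudoMetricSpace (X i)] (G : (∀ i, X i) → ∀ i, X i) (A : Matrix ι ι ℝ)
    (hA : ∀ j i, 0 ≤ A j i)
    (hG : ∀ x y j, dist (G x j) (G y j) ≤ ∑ i, A j i * dist (x i) (y i))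
    (hρ : spectralRadius ℂ (A.map Complex.ofReal) < 1) :
    ∃ c : ℕ → ℝ, (∀ k, 0 ≤ c k) ∧ Tendsto c atTop (𝓝 0) ∧
      ∀ k x y, dist (G^[k] x) (G^[k] y) ≤ c k * dist x y := by
  refine ⟨fun k => ‖(A.map Complex.ofReal) ^ k‖, fun k => norm_nonneg _,
    tendsto_norm_pow_of_spectralRadius_lt_one _ hρ, fun k x y => ?_⟩
  refine (dist_pi_le_iff (by positivity)).2 fun j => (dist_iterate_le G A hA hG k x y j).trans ?_
  have hpow : (A.map Complex.ofReal) ^ k = (A ^ k).map Complex.ofReal :=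
    (Matrix.map_pow A Complex.ofRealHom k).symm
  have hrow : ∑ i, |(A ^ k) j i| ≤ ‖(A.map Complex.ofReal) ^ k‖ := by
    rw [hpow, Matrix.linfty_opNorm_def]
    have := Finset.le_sup (f := fun j => ∑ i, ‖((A ^ k).map Complex.ofReal) j i‖₊)
      (Finset.mem_univ j)
    have h2 := NNReal.coe_le_coe.2 this
    simpa using h2
  calc _ ≤ ∑ i, |(A ^ k) j i| * dist x y := Finset.sum_le_sum fun i _ =>
        mul_le_mul (le_abs_self _) (dist_le_pi_dist x y i) dist_nonneg (abs_nonneg _)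
    _ = (∑ i, |(A ^ k) j i|) * dist x y := (Finset.sum_mul ..).symm
    _ ≤ _ := mul_le_mul_of_nonneg_right hrow dist_nonneg

end

/-- Banach's fixed point theorem for a map whose iterates have Lipschitz constants tending
to `0`. -/
lemma exists_attracting_of_lipschitz_iterate {Y : Type*} [MetricSpace Y] [CompleteSpace Y]
    [Nonempty Y] (G : Y → Y) (c : ℕ → ℝ) (hc0 : ∀ k, 0 ≤ c k) (hc : Tendsto c atTop (𝓝 0))
    (hG : ∀ k x y, dist (G^[k] x) (G^[k] y) ≤ c k * dist x y) :
    ∃ p, G p = p ∧ ∀ x, Tendsto (fun k => G^[k] x) atTop (𝓝 p) := by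
  obtain ⟨N, hN⟩ := (hc.eventually (gt_mem_nhds one_pos)).exists
  have hcon : ContractingWith ⟨c N, hc0 N⟩ G^[N] :=
    ⟨by exact_mod_cast hN, LipschitzWith.of_dist_le_mul fun x y => hG N x y⟩
  have hp := hcon.isFixedPt_fixedPoint_iterate
  refine ⟨_, hp, fun x => tendsto_iff_dist_tendsto_zero.2 ?_⟩
  refine squeeze_zero (fun _ => dist_nonneg) (fun k => ?_)
    (by simpa using hc.mul_const (dist x (ContractingWith.fixedPoint G^[N] hcon)))
  simpa only [(hp.iterate k).eq] using hG k x (ContractingWith.fixedPoint G^[N] hcon)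

/-- **Global stability of dynamical networks.** Let `(𝓕, X)` be a dynamical network,
`𝓕 = F ∘ T`, where the local maps `T i` on the nonempty complete metric spaces `X i` have
Lipschitz constants `L i` and the interaction `F` has Lipschitz matrix `Λ`; the product space
`∀ i, X i` carries the max metric. If the spectral radius of `M_𝓕 = Λᵀ · diag (L 1, …, L n)`
is less than `1`, then `𝓕` has a globally attracting fixed point. -/
theorem stmt10 {n : ℕ}
    (X : Fin n → Type) [∀ i, MetricSpace (X i)] [∀ i, CompleteSpace (X i)]
    [∀ i, Nonempty (X i)]
    (T : ∀ i, X i → X i) (L : Fin n → ℝ) (hL : ∀ i, 0 ≤ L i)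
    (hT : ∀ (i : Fin n) (x y : X i), dist (T i x) (T i y) ≤ L i * dist x y)
    (F : (∀ i, X i) → (∀ i, X i))
    (Λ : Matrix (Fin n) (Fin n) ℝ) (hΛ : ∀ i j, 0 ≤ Λ i j)
    (hF : ∀ (x y : ∀ i, X i) (j : Fin n),
      dist (F x j) (F y j) ≤ ∑ i : Fin n, Λ i j * dist (x i) (y i))
    (hρ : spectralRadius ℂ ((Matrix.of fun j i => Λ i j * L i).map Complex.ofReal) < 1) :
    ∃ xt : ∀ i, X i, F (fun i => T i (xt i)) = xt ∧
      ∀ x : ∀ i, X i,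
        Filter.Tendsto (fun k => (fun y : ∀ i, X i => F (fun i => T i (y i)))^[k] x)
          Filter.atTop (nhds xt) := by
  obtain ⟨c, hc0, hc, hlip⟩ := exists_lipschitz_iterate
    (fun y : ∀ i, X i => F (fun i => T i (y i))) (Matrix.of fun j i => Λ i j * L i)
    (fun j i => mul_nonneg (hΛ i j) (hL i))
    (fun x y j => (hF _ _ j).trans <| Finset.sum_le_sum fun i _ => by
      simpa only [Matrix.of_apply, mul_assoc] using
        mul_le_mul_of_nonneg_left (hT i (x i) (y i)) (hΛ i j)) hρ
  exact exists_attracting_of_lipschitz_iterate _ c hc0 hc hlip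
end

section
/- Let A ∈ ℂ^{n×n}, let S be a complete structural set of A, and let α ∈ ℂ with α ≠ 0 be an eigenvalue of A. Then α is an eigenvalue of the complex S×S matrix A_S(α) obtained by evaluating the reduced matrix at λ = α. -/
/-!
Take an eigenvector `x` of `A` for `α`. For a vertex `v`, let an exit path from `v` to `j ∈ S` be
a walk in the digraph whose only vertex in `S` is its last vertex `j`. Every cycle meets `S`, so a
walk avoiding `S` never repeats a vertex (`nodup_of_avoids`); hence there are finitely many exit
paths, and the equation `x v = ∑ k, A v k / α * x k` for `v ∉ S` can be substituted into itself
until only coordinates in `S` remain. This expresses `x v` as the sum of `x j`, weighted by the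
total weight `exitWeight` of the exit paths from `v` to `j` (`eigenvector_eq_exitWeight`).
Consequently the restriction of `x` to `S` is nonzero. A branch from `i ∈ S` is the vertex `i`
followed by an exit path, so inserting this expression into `α * x i = ∑ k, A i k * x k` shows
that the restriction is an eigenvector of the reduced matrix for `α`.
-/

open scoped BigOperators

/-- A cycle of the digraph of a complex matrix: a nonempty list of distinct vertices with
edges (nonzero entries) between consecutive vertices and from the last vertex back to
the first. A loop is a cycle of length 1. -/
def IsCycleC {n : ℕ} (A : Matrix (Fin n) (Fin n) ℂ) (l : List (Fin n)) : Prop :=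
  l ≠ [] ∧ l.Nodup ∧ l.Chain' (fun u v => A u v ≠ 0) ∧
    ∀ u v : Fin n, l.head? = some u → l.getLast? = some v → A v u ≠ 0

/-- A branch of the digraph of `A` from `i ∈ S` to `j ∈ S` with respect to `S`: a path, or a
cycle (first vertex equal to last vertex), with no interior vertex in `S`. -/
def IsBranchC {n : ℕ} (A : Matrix (Fin n) (Fin n) ℂ) (S : Finset (Fin n)) (i j : Fin n)
    (l : List (Fin n)) : Prop :=
  2 ≤ l.length ∧ l.head? = some i ∧ l.getLast? = some j ∧ i ∈ S ∧ j ∈ S ∧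
    l.Chain' (fun u v => A u v ≠ 0) ∧ (∀ v ∈ l.tail.dropLast, v ∉ S) ∧
    l.dropLast.Nodup ∧ l.tail.Nodup

/-- `S` is a complete structural set of `A`: every cycle (including loops) contains a
vertex of `S`, and every vertex belongs to some branch with respect to `S`. -/
def IsCompleteStructuralSet {n : ℕ} (A : Matrix (Fin n) (Fin n) ℂ) (S : Finset (Fin n)) : Prop :=
  (∀ l, IsCycleC A l → ∃ v ∈ l, v ∈ S) ∧
    ∀ v : Fin n, ∃ i j l, IsBranchC A S i j l ∧ v ∈ l

/-- `∏_{k=2}^{m−1} A_{v_k v_{k+1}} / λ` along the tail of a branch. -/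
noncomputable def innerProdC {n : ℕ} (A : Matrix (Fin n) (Fin n) ℂ) (lam : ℂ) :
    List (Fin n) → ℂ
  | u :: v :: rest => A u v / lam * innerProdC A lam (v :: rest)
  | _ => 1

/-- The contribution `A_{v_1 v_2} · ∏_{k=2}^{m−1} A_{v_k v_{k+1}} / λ` of a branch. -/
noncomputable def branchProdC {n : ℕ} (A : Matrix (Fin n) (Fin n) ℂ) (lam : ℂ) :
    List (Fin n) → ℂ
  | u :: v :: rest => A u v * innerProdC A lam (v :: rest)
  | _ => 0

/-- The entry `A_S(λ)_{ij}` of the reduced matrix: the sum over all branches from `i` to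
`j` of their contributions. -/
noncomputable def redEntry {n : ℕ} (A : Matrix (Fin n) (Fin n) ℂ) (S : Finset (Fin n))
    (lam : ℂ) (i j : Fin n) : ℂ :=
  ∑ᶠ l ∈ {l : List (Fin n) | IsBranchC A S i j l}, branchProdC A lam l

/-- A walk in the digraph of `A` from `k` to `j ∈ S`, given by its list of vertices, none of which
except the last lies in `S`. For `k ∈ S` the only such list is `[k]`. -/
def IsExitPath {n : ℕ} (A : Matrix (Fin n) (Fin n) ℂ) (S : Finset (Fin n)) (k j : Fin n)
    (l : List (Fin n)) : Prop :=
  l.head? = some k ∧ l.getLast? = some j ∧ j ∈ S ∧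
    l.IsChain (fun u v => A u v ≠ 0) ∧ ∀ v ∈ l.dropLast, v ∉ S

/-- The sum over all exit paths from `k` to `j` of the product of the `A u v / α` along the
path. -/
noncomputable def exitWeight {n : ℕ} (A : Matrix (Fin n) (Fin n) ℂ) (S : Finset (Fin n))
    (α : ℂ) (k j : Fin n) : ℂ :=
  ∑ᶠ l ∈ {l | IsExitPath A S k j l}, innerProdC A α l

/-- A walk avoiding `S` has no repeated vertex: the segment between two successive visits to a
vertex would be a cycle missing `S`. -/
theorem nodup_of_avoids {n : ℕ} {A : Matrix (Fin n) (Fin n) ℂ} {S : Finset (Fin n)}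
    (hS : ∀ l, IsCycleC A l → ∃ v ∈ l, v ∈ S) (l : List (Fin n))
    (hc : l.IsChain (fun u v => A u v ≠ 0)) (hl : ∀ v ∈ l, v ∉ S) : l.Nodup := by
  induction l with
  | nil => simp
  | cons a l ih =>
    have hl' : l.Nodup := ih hc.tail fun v hv => hl v (List.mem_cons_of_mem _ hv)
    refine List.nodup_cons.2 ⟨fun ha => ?_, hl'⟩
    obtain ⟨s, t, rfl⟩ := List.append_of_mem ha
    have hc' : List.IsChain (fun u v => A u v ≠ 0) ((a :: s) ++ (a :: t)) := by simpa using hc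
    rw [List.isChain_append] at hc'
    have hcyc : IsCycleC A (a :: s) := by
      refine ⟨by simp, ?_, hc'.1, ?_⟩
      · rw [List.nodup_append] at hl'
        refine List.nodup_cons.2 ⟨fun h => hl'.2.2 a h a (by simp) rfl, hl'.1⟩
      · intro u v hu hv
        have hua : a = u := by simpa using hu
        subst hua
        exact hc'.2.2 v hv a (by simp)
    obtain ⟨v, hv, hvS⟩ := hS _ hcyc
    refine hl v ?_ hvS
    rcases List.mem_cons.1 hv with rfl | hv
    · simp
    · simp [hv]

theorem IsExitPath.nodup {n : ℕ} {A : Matrix (Fin n) (Fin n) ℂ} {S : Finset (Fin n)}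
    (hS : ∀ l, IsCycleC A l → ∃ v ∈ l, v ∈ S) {k j : Fin n} {l : List (Fin n)}
    (h : IsExitPath A S k j l) : l.Nodup := by
  obtain ⟨_, h2, h3, h4, h5⟩ := h
  obtain ⟨p, rfl⟩ := List.getLast?_eq_some_iff.1 h2
  rw [List.dropLast_concat] at h5
  rw [List.isChain_append] at h4
  have hp := nodup_of_avoids hS p h4.1 h5
  rw [List.nodup_append]
  refine ⟨hp, by simp, ?_⟩
  rintro a ha b hb rfl
  rw [List.mem_singleton] at hb
  exact h5 a ha (hb ▸ h3)

theorem finite_exitPaths {n : ℕ} {A : Matrix (Fin n) (Fin n) ℂ} {S : Finset (Fin n)}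
    (hS : ∀ l, IsCycleC A l → ∃ v ∈ l, v ∈ S) (k j : Fin n) :
    {l | IsExitPath A S k j l}.Finite := by
  refine (List.finite_length_le (Fin n) n).subset fun l hl => ?_
  simpa using (IsExitPath.nodup hS hl).length_le_card

/-- A sum over walks that start with an edge `u → k` followed by an exit path from `k`, split
according to `k`. -/
theorem finsum_cons_exitPaths {n : ℕ} {A : Matrix (Fin n) (Fin n) ℂ} {S : Finset (Fin n)}
    (hS : ∀ l, IsCycleC A l → ∃ v ∈ l, v ∈ S) (α : ℂ) (u j : Fin n) (T : Set (List (Fin n)))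
    (hT : ∀ l, l ∈ T ↔ ∃ k l', A u k ≠ 0 ∧ IsExitPath A S k j l' ∧ l = u :: l')
    (f : List (Fin n) → ℂ) (c : Fin n → ℂ) (hc : ∀ k, A u k = 0 → c k = 0)
    (hf : ∀ k t, f (u :: k :: t) = c k * innerProdC A α (k :: t)) :
    ∑ᶠ l ∈ T, f l = ∑ k, c k * exitWeight A S α k j := by
  have hTU : T = ⋃ k, (List.cons u) '' {l | A u k ≠ 0 ∧ IsExitPath A S k j l} := by
    ext l
    simp only [hT, Set.mem_iUnion, Set.mem_image, Set.mem_setOf_eq]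
    constructor
    · rintro ⟨k, l', h1, h2, rfl⟩
      exact ⟨k, l', ⟨h1, h2⟩, rfl⟩
    · rintro ⟨k, l', ⟨h1, h2⟩, rfl⟩
      exact ⟨k, l', h1, h2, rfl⟩
  rw [hTU, finsum_mem_iUnion, finsum_eq_sum_of_fintype]
  · refine Finset.sum_congr rfl fun k _ => ?_
    rw [finsum_mem_image (List.cons_injective.injOn)]
    by_cases hk : A u k = 0
    · simp [hk, hc k hk]
    · rw [exitWeight, mul_finsum_mem]
      refine finsum_mem_congr (by ext l; simp [hk]) fun l hl => ?_
      obtain ⟨t, rfl⟩ := List.head?_eq_some_iff.1 hl.1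
      exact hf k t
  · intro k k' hkk'
    rw [Function.onFun, Set.disjoint_left]
    rintro _ ⟨l, hl, rfl⟩ ⟨l', hl', he⟩
    obtain rfl := List.cons_injective he
    exact hkk' (Option.some.inj (hl.2.1.symm.trans hl'.2.1))
  · intro k
    exact ((finite_exitPaths hS k j).subset fun l hl => hl.2).image _

theorem exitWeight_of_mem {n : ℕ} {A : Matrix (Fin n) (Fin n) ℂ} {S : Finset (Fin n)}
    (α : ℂ) {k : Fin n} (hk : k ∈ S) (j : Fin n) :
    exitWeight A S α k j = if k = j then 1 else 0 := by
  have key : ∀ l, IsExitPath A S k j l ↔ k = j ∧ l = [k] := by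
    intro l
    constructor
    · rintro ⟨h1, h2, -, -, h5⟩
      obtain ⟨t, rfl⟩ := List.head?_eq_some_iff.1 h1
      cases t with
      | nil => exact ⟨by simpa using h2, rfl⟩
      | cons b t => exact absurd hk (h5 k (by simp))
    · rintro ⟨rfl, rfl⟩
      simp [IsExitPath, hk]
  unfold exitWeight
  simp only [key]
  split_ifs with h
  · simp [h, innerProdC]
  · simp [h]

theorem exitWeight_of_notMem {n : ℕ} {A : Matrix (Fin n) (Fin n) ℂ} {S : Finset (Fin n)}
    (hS : ∀ l, IsCycleC A l → ∃ v ∈ l, v ∈ S) (α : ℂ) {v : Fin n} (hv : v ∉ S) (j : Fin n) :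
    exitWeight A S α v j = ∑ k, A v k / α * exitWeight A S α k j := by
  refine finsum_cons_exitPaths hS α v j _ (fun l => ?_) _ _ (fun k hk => by simp [hk])
    (fun k t => rfl)
  constructor
  · rintro ⟨h1, h2, h3, h4, h5⟩
    obtain ⟨t, rfl⟩ := List.head?_eq_some_iff.1 h1
    cases t with
    | nil =>
      have hvj : v = j := by simpa using h2
      exact absurd (hvj ▸ h3) hv
    | cons b t =>
      rw [List.isChain_cons_cons] at h4
      refine ⟨b, b :: t, h4.1, ⟨rfl, by simpa using h2, h3, h4.2, fun w hw => h5 w ?_⟩, rfl⟩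
      simp [hw]
  · rintro ⟨k, l', h, ⟨h1, h2, h3, h4, h5⟩, rfl⟩
    obtain ⟨t, rfl⟩ := List.head?_eq_some_iff.1 h1
    refine ⟨rfl, by simpa using h2, h3, List.isChain_cons_cons.2 ⟨h, h4⟩, fun w hw => ?_⟩
    rw [List.dropLast_cons_cons, List.mem_cons] at hw
    rcases hw with rfl | hw
    · exact hv
    · exact h5 w hw

theorem redEntry_eq {n : ℕ} {A : Matrix (Fin n) (Fin n) ℂ} {S : Finset (Fin n)}
    (hS : ∀ l, IsCycleC A l → ∃ v ∈ l, v ∈ S) (α : ℂ) {i : Fin n} (hi : i ∈ S) (j : Fin n) :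
    redEntry A S α i j = ∑ k, A i k * exitWeight A S α k j := by
  refine finsum_cons_exitPaths hS α i j _ (fun l => ?_) _ _ (fun k hk => hk)
    (fun k t => rfl)
  constructor
  · rintro ⟨h0, h1, h2, -, h3, h4, h5, -, -⟩
    obtain ⟨t, rfl⟩ := List.head?_eq_some_iff.1 h1
    cases t with
    | nil => simp at h0
    | cons b t =>
      have h4' := List.isChain_cons_cons.1 h4
      exact ⟨b, b :: t, h4'.1, ⟨rfl, by simpa using h2, h3, h4'.2, h5⟩, rfl⟩
  · rintro ⟨k, l', h, hl', rfl⟩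
    have hnd := IsExitPath.nodup hS hl'
    obtain ⟨h1, h2, h3, h4, h5⟩ := hl'
    obtain ⟨t, rfl⟩ := List.head?_eq_some_iff.1 h1
    refine ⟨by simp, rfl, by simpa using h2, hi, h3, List.isChain_cons_cons.2 ⟨h, h4⟩, h5, ?_, hnd⟩
    rw [List.dropLast_cons_cons, List.nodup_cons]
    exact ⟨fun hm => h5 i hm hi, hnd.sublist (List.dropLast_sublist _)⟩

/-- Every coordinate of an eigenvector is determined by its coordinates in `S`. -/
theorem eigenvector_eq_exitWeight {n : ℕ} {A : Matrix (Fin n) (Fin n) ℂ} {S : Finset (Fin n)}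
    (hS : ∀ l, IsCycleC A l → ∃ v ∈ l, v ∈ S) {α : ℂ} (hα : α ≠ 0) {x : Fin n → ℂ}
    (hx : ∀ i, ∑ k, A i k * x k = α * x i) (v : Fin n) :
    x v = ∑ j ∈ S, exitWeight A S α v j * x j := by
  have hin : ∀ v ∈ S, x v = ∑ j ∈ S, exitWeight A S α v j * x j := by
    intro v hv
    simp [exitWeight_of_mem α hv, hv]
  -- Induction on the room `m` left for prolonging a walk `p ++ [v]` that avoids `S`; such a walk
  -- has at most `n` vertices.
  have key : ∀ (m : ℕ) (p : List (Fin n)) (v : Fin n), n ≤ p.length + m →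
      (p ++ [v]).IsChain (fun a b => A a b ≠ 0) → (∀ w ∈ p ++ [v], w ∉ S) →
      x v = ∑ j ∈ S, exitWeight A S α v j * x j := by
    intro m
    induction m with
    | zero =>
      intro p v hn hc hp
      have hlen := (nodup_of_avoids hS _ hc hp).length_le_card
      simp at hlen
      omega
    | succ m ih =>
      intro p v hn hc hp
      have hv : v ∉ S := hp v (by simp)
      have hk : ∀ k, A v k / α * x k =
          A v k / α * ∑ j ∈ S, exitWeight A S α k j * x j := by
        intro k
        by_cases hA : A v k = 0
        · simp [hA]
        congr 1
        by_cases hkS : k ∈ S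
        · exact hin k hkS
        refine ih (p ++ [v]) k (by simp; omega) ?_ ?_
        · rw [List.isChain_append]
          refine ⟨hc, by simp, ?_⟩
          simpa using hA
        · intro w hw
          rcases List.mem_append.1 hw with hw | hw
          · exact hp w hw
          · rw [List.mem_singleton] at hw
            exact hw ▸ hkS
      have hxv : x v = ∑ k, A v k / α * x k := by
        have := hx v
        rw [← mul_right_inj' hα, ← this, Finset.mul_sum]
        refine Finset.sum_congr rfl fun k _ => ?_
        field_simp
      rw [hxv, Finset.sum_congr rfl fun k _ => hk k]
      simp_rw [exitWeight_of_notMem hS α hv, Finset.mul_sum, Finset.sum_mul]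
      rw [Finset.sum_comm]
      simp_rw [mul_assoc]
  by_cases hv : v ∈ S
  · exact hin v hv
  · exact key n [] v (by simp) (by simp) (by simpa using hv)

/-- The spectrum of a complex matrix consists of its eigenvalues in the vector sense. -/
theorem mem_spectrum_iff_exists_vec {m : Type*} [Fintype m] [DecidableEq m]
    (M : Matrix m m ℂ) (α : ℂ) :
    α ∈ spectrum ℂ M ↔ ∃ x : m → ℂ, x ≠ 0 ∧ ∀ i, ∑ k, M i k * x k = α * x i := by
  rw [spectrum.mem_iff, Matrix.isUnit_iff_isUnit_det, isUnit_iff_ne_zero, not_not,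
    ← Matrix.exists_mulVec_eq_zero_iff]
  refine exists_congr fun x => and_congr_right fun _ => ?_
  rw [Matrix.sub_mulVec, sub_eq_zero, Algebra.algebraMap_eq_smul_one, Matrix.smul_mulVec,
    Matrix.one_mulVec, funext_iff]
  exact forall_congr' fun i => ⟨fun h => h.symm, fun h => h.symm⟩

theorem stmt13 {n : ℕ} (A : Matrix (Fin n) (Fin n) ℂ) (S : Finset (Fin n))
    (hS : IsCompleteStructuralSet A S) (α : ℂ) (hα : α ≠ 0)
    (heig : α ∈ spectrum ℂ A) :
    α ∈ spectrum ℂ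
      (Matrix.of fun i j : {x // x ∈ S} => redEntry A S α i.val j.val) := by
  obtain ⟨x, hx0, hx⟩ := (mem_spectrum_iff_exists_vec A α).1 heig
  have hrep := eigenvector_eq_exitWeight hS.1 hα hx
  rw [mem_spectrum_iff_exists_vec]
  refine ⟨fun i => x i.val, fun h0 => hx0 ?_, fun i => ?_⟩
  · funext v
    rw [hrep v]
    refine Finset.sum_eq_zero fun j hj => ?_
    have hj0 : x j = 0 := congrFun h0 ⟨j, hj⟩
    rw [hj0, mul_zero]
  · simp only [Matrix.of_apply]
    rw [Finset.sum_coe_sort S (fun j => redEntry A S α i.val j * x j), ← hx i.val]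
    calc ∑ j ∈ S, redEntry A S α i.val j * x j
        = ∑ j ∈ S, ∑ k, A i.val k * (exitWeight A S α k j * x j) := by
          refine Finset.sum_congr rfl fun j _ => ?_
          rw [redEntry_eq hS.1 α i.property, Finset.sum_mul]
          simp_rw [mul_assoc]
      _ = ∑ k, A i.val k * x k := by
          rw [Finset.sum_comm]
          refine Finset.sum_congr rfl fun k _ => ?_
          rw [← Finset.mul_sum, ← hrep k]
end
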